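/- arXiv:1307.5383 — 9 statements merged into one kernel-verified Lean document; each statement's English description precedes it below -/
import Mathlib

section
/- For all 2 ≤ k ≤ n, (σ_{k−1}⁻¹⋯σ₂⁻¹σ₁⁻¹) · Q_k^{k−1} = Q_{k−1}^{k−1}; equivalently, P_k⁻¹ · Q_k^{k−1} = Q_{k−1}^{k−1}. -/
/-- `Qb σ k = σ_{k-1} σ_{k-2} ⋯ σ₁` (with `Qb σ 1 = 1`). -/
def Qb {G : Type*} [Group G] (σ : ℕ → G) : ℕ → G
  | 0 => 1
  | 1 => 1
  | (k+2) => σ (k+1) * Qb σ (k+1)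

/-- `Pb σ k = σ₁ σ₂ ⋯ σ_{k-1}` (with `Pb σ 1 = 1`). -/
def Pb {G : Type*} [Group G] (σ : ℕ → G) : ℕ → G
  | 0 => 1
  | 1 => 1
  | (k+2) => Pb σ (k+1) * σ (k+1)

/-- The torsion `Tb σ k = (σ₁)(σ₂σ₁)⋯(σ_{k-1}⋯σ₁) = Q₁ Q₂ ⋯ Q_k` (with `Tb σ 1 = 1`). -/
def Tb {G : Type*} [Group G] (σ : ℕ → G) : ℕ → G
  | 0 => 1
  | (k+1) => Tb σ k * Qb σ (k+1)

/-- `Rb σ a j = σ_{a+1} ⋯ σ_{a+j}`. -/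
def Rb {G : Type*} [Group G] (σ : ℕ → G) (a : ℕ) : ℕ → G
  | 0 => 1
  | (j+1) => Rb σ a j * σ (a+j+1)

lemma Pb_eq_Rb {G : Type*} [Group G] (σ : ℕ → G) (m : ℕ) : Pb σ (m+1) = Rb σ 0 m := by
  induction m with
  | zero => rfl
  | succ m ih => simp only [Pb, Rb, ih, Nat.zero_add]

lemma Qb_comm {G : Type*} [Group G] (n : ℕ) (σ : ℕ → G)
    (hcomm : ∀ i j : ℕ, 1 ≤ i → i + 1 < j → j + 1 ≤ n → σ i * σ j = σ j * σ i)
    (m j : ℕ) (hj : m + 1 < j) (hjn : j + 1 ≤ n) :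
    Qb σ (m+1) * σ j = σ j * Qb σ (m+1) := by
  induction m with
  | zero => simp [Qb]
  | succ m ih =>
    simp only [Qb]
    rw [mul_assoc, ih (by omega), ← mul_assoc, hcomm (m+1) j (by omega) (by omega) hjn, mul_assoc]

lemma Qb_shift {G : Type*} [Group G] (n : ℕ) (σ : ℕ → G)
    (hcomm : ∀ i j : ℕ, 1 ≤ i → i + 1 < j → j + 1 ≤ n → σ i * σ j = σ j * σ i)
    (hbraid : ∀ i : ℕ, 1 ≤ i → i + 2 ≤ n →
      σ i * σ (i + 1) * σ i = σ (i + 1) * σ i * σ (i + 1))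
    (m i : ℕ) (hi : 1 ≤ i) (him : i < m) (hm : m + 1 ≤ n) :
    Qb σ (m+1) * σ (i+1) = σ i * Qb σ (m+1) := by
  induction m with
  | zero => omega
  | succ m ih =>
    rcases Nat.lt_or_ge i m with h | h
    · simp only [Qb]
      rw [mul_assoc, ih h (by omega), ← mul_assoc, ← mul_assoc,
        hcomm i (m+1) hi (by omega) (by omega)]
    · obtain rfl : i = m := by omega
      obtain ⟨p, rfl⟩ : ∃ p, i = p + 1 := ⟨i - 1, by omega⟩
      simp only [Qb]
      rw [mul_assoc, mul_assoc, Qb_comm n σ hcomm p (p+1+1) (by omega) (by omega)]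
      simp only [← mul_assoc]
      rw [hbraid (p+1) hi (by omega)]

lemma Qb_Rb {G : Type*} [Group G] (n : ℕ) (σ : ℕ → G)
    (hcomm : ∀ i j : ℕ, 1 ≤ i → i + 1 < j → j + 1 ≤ n → σ i * σ j = σ j * σ i)
    (hbraid : ∀ i : ℕ, 1 ≤ i → i + 2 ≤ n →
      σ i * σ (i + 1) * σ i = σ (i + 1) * σ i * σ (i + 1))
    (m a j : ℕ) (h : a + 1 + j ≤ m) (hm : m + 1 ≤ n) :
    Qb σ (m+1) * Rb σ (a+1) j = Rb σ a j * Qb σ (m+1) := by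
  induction j with
  | zero => simp [Rb]
  | succ j ih =>
    simp only [Rb]
    rw [← mul_assoc, ih (by omega), mul_assoc, mul_assoc,
      show a + 1 + j + 1 = (a + j + 1) + 1 by omega,
      Qb_shift n σ hcomm hbraid m (a+j+1) (by omega) (by omega) hm]

lemma Qb_pow {G : Type*} [Group G] (n : ℕ) (σ : ℕ → G)
    (hcomm : ∀ i j : ℕ, 1 ≤ i → i + 1 < j → j + 1 ≤ n → σ i * σ j = σ j * σ i)
    (hbraid : ∀ i : ℕ, 1 ≤ i → i + 2 ≤ n →
      σ i * σ (i + 1) * σ i = σ (i + 1) * σ i * σ (i + 1))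
    (p : ℕ) (hm : p + 2 ≤ n) (j a : ℕ) (h : a + j = p + 1) :
    Qb σ (p+2) ^ j = Rb σ a j * Qb σ (p+1) ^ j := by
  induction j generalizing a with
  | zero => simp [Rb]
  | succ j ih =>
    rw [pow_succ', ih (a+1) (by omega), ← mul_assoc,
      Qb_Rb n σ hcomm hbraid (p+1) a j (by omega) (by omega)]
    have : a + j + 1 = p + 1 := by omega
    simp only [Rb, Qb, this, pow_succ' (Qb σ (p+1)) j, mul_assoc]

/-- For `2 ≤ k ≤ n`, `(σ_{k−1}⁻¹⋯σ₂⁻¹σ₁⁻¹) · Q_k^(k−1) = Q_{k−1}^(k−1)`,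
i.e. `P_k⁻¹ · Q_k^(k−1) = Q_{k−1}^(k−1)`. -/
theorem P_inv_mul_Q_pow {G : Type*} [Group G] (n : ℕ) (hn : 1 ≤ n)
    (σ : ℕ → G)
    (hcomm : ∀ i j : ℕ, 1 ≤ i → i + 1 < j → j + 1 ≤ n → σ i * σ j = σ j * σ i)
    (hbraid : ∀ i : ℕ, 1 ≤ i → i + 2 ≤ n →
      σ i * σ (i + 1) * σ i = σ (i + 1) * σ i * σ (i + 1))
    (k : ℕ) (hk2 : 2 ≤ k) (hk : k ≤ n) :
    (Pb σ k)⁻¹ * (Qb σ k) ^ (k - 1) = (Qb σ (k - 1)) ^ (k - 1) := by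
  obtain ⟨p, rfl⟩ : ∃ p, k = p + 2 := ⟨k - 2, by omega⟩
  rw [show p + 2 - 1 = p + 1 by omega, Qb_pow n σ hcomm hbraid p hk (p+1) 0 (by omega),
    Pb_eq_Rb, inv_mul_cancel_left]
end

section
/- For all 1 ≤ k ≤ n, the square of the torsion equals the k-th power of P_k: T_k · T_k = P_k^k. -/
/-- `Db σ k j = σ_k σ_{k-1} ⋯ σ_{k-j+1}`. -/
def Db {G : Type*} [Group G] (σ : ℕ → G) (k : ℕ) : ℕ → G
  | 0 => 1
  | (j+1) => Db σ k j * σ (k - j)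

theorem Db_succ {G : Type*} [Group G] (σ : ℕ → G) (k j : ℕ) :
    Db σ (k+1) (j+1) = σ (k+1) * Db σ k j := by
  induction j with
  | zero => simp [Db]
  | succ j ih =>
    rw [Db, ih, Db, mul_assoc, Nat.add_sub_add_right]

theorem Db_eq_Qb {G : Type*} [Group G] (σ : ℕ → G) (k : ℕ) :
    Db σ k k = Qb σ (k+1) := by
  induction k with
  | zero => simp [Db, Qb]
  | succ k ih => rw [Db_succ, ih, Qb]

theorem comm_Pb {G : Type*} [Group G] (n : ℕ) (σ : ℕ → G)
    (hcomm : ∀ i j : ℕ, 1 ≤ i → i + 1 < j → j + 1 ≤ n → σ i * σ j = σ j * σ i)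
    (j : ℕ) (hj : j + 1 ≤ n) (m : ℕ) (hm : m + 1 ≤ j) : Commute (Pb σ m) (σ j) := by
  induction m with
  | zero => exact Commute.one_left _
  | succ m ih =>
    cases m with
    | zero => exact Commute.one_left _
    | succ m =>
      exact (ih (by omega)).mul_left (hcomm (m+1) j (by omega) (by omega) hj)

theorem comm_Qb {G : Type*} [Group G] (n : ℕ) (σ : ℕ → G)
    (hcomm : ∀ i j : ℕ, 1 ≤ i → i + 1 < j → j + 1 ≤ n → σ i * σ j = σ j * σ i)
    (j : ℕ) (hj : j + 1 ≤ n) (m : ℕ) (hm : m + 1 ≤ j) : Commute (Qb σ m) (σ j) := by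
  induction m with
  | zero => exact Commute.one_left _
  | succ m ih =>
    cases m with
    | zero => exact Commute.one_left _
    | succ m =>
      exact Commute.mul_left (hcomm (m+1) j (by omega) (by omega) hj) (ih (by omega))

theorem comm_Tb {G : Type*} [Group G] (n : ℕ) (σ : ℕ → G)
    (hcomm : ∀ i j : ℕ, 1 ≤ i → i + 1 < j → j + 1 ≤ n → σ i * σ j = σ j * σ i)
    (j : ℕ) (hj : j + 1 ≤ n) (m : ℕ) (hm : m + 1 ≤ j) : Commute (Tb σ m) (σ j) := by
  induction m with
  | zero => exact Commute.one_left _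
  | succ m ih => exact (ih (by omega)).mul_left (comm_Qb n σ hcomm j hj (m+1) hm)

theorem Tb_eq_Pb_mul {G : Type*} [Group G] (n : ℕ) (σ : ℕ → G)
    (hcomm : ∀ i j : ℕ, 1 ≤ i → i + 1 < j → j + 1 ≤ n → σ i * σ j = σ j * σ i)
    (k : ℕ) (hk : k + 1 ≤ n) : Tb σ (k+1) = Pb σ (k+1) * Tb σ k := by
  induction k with
  | zero => simp [Tb, Pb, Qb]
  | succ k ih =>
    have hc := (comm_Tb n σ hcomm (k+1) hk k le_rfl).eq
    calc Tb σ (k+2) = Tb σ (k+1) * (σ (k+1) * Qb σ (k+1)) := rfl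
      _ = Pb σ (k+1) * (Tb σ k * σ (k+1)) * Qb σ (k+1) := by
        rw [ih (by omega)]; simp only [mul_assoc]
      _ = Pb σ (k+1) * σ (k+1) * (Tb σ k * Qb σ (k+1)) := by
        rw [hc]; simp only [mul_assoc]
      _ = Pb σ (k+2) * Tb σ (k+1) := rfl

theorem Pb_shift {G : Type*} [Group G] (n : ℕ) (σ : ℕ → G)
    (hcomm : ∀ i j : ℕ, 1 ≤ i → i + 1 < j → j + 1 ≤ n → σ i * σ j = σ j * σ i)
    (hbraid : ∀ i : ℕ, 1 ≤ i → i + 2 ≤ n →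
      σ i * σ (i + 1) * σ i = σ (i + 1) * σ i * σ (i + 1))
    (i : ℕ) (hi : 1 ≤ i) (m : ℕ) (him : i + 2 ≤ m) (hm : m ≤ n) :
    σ (i+1) * Pb σ m = Pb σ m * σ i := by
  induction m, him using Nat.le_induction with
  | base =>
    obtain ⟨i, rfl⟩ : ∃ a, i = a + 1 := ⟨i - 1, by omega⟩
    have hc := (comm_Pb n σ hcomm (i+2) (by omega) (i+1) le_rfl).eq
    have hb := hbraid (i+1) hi hm
    calc σ (i+2) * (Pb σ (i+1) * σ (i+1) * σ (i+2))
        = (σ (i+2) * Pb σ (i+1)) * σ (i+1) * σ (i+2) := by simp only [mul_assoc]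
      _ = Pb σ (i+1) * (σ (i+2) * σ (i+1) * σ (i+2)) := by rw [← hc]; simp only [mul_assoc]
      _ = Pb σ (i+1) * σ (i+1) * σ (i+2) * σ (i+1) := by rw [← hb]; simp only [mul_assoc]
  | succ m him ih =>
    obtain ⟨m, rfl⟩ : ∃ a, m = a + 1 := ⟨m - 1, by omega⟩
    rw [Pb, ← mul_assoc, ih (by omega), mul_assoc, hcomm i (m+1) hi (by omega) hm, mul_assoc]

theorem Db_mul_Pb {G : Type*} [Group G] (n : ℕ) (σ : ℕ → G)
    (hcomm : ∀ i j : ℕ, 1 ≤ i → i + 1 < j → j + 1 ≤ n → σ i * σ j = σ j * σ i)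
    (hbraid : ∀ i : ℕ, 1 ≤ i → i + 2 ≤ n →
      σ i * σ (i + 1) * σ i = σ (i + 1) * σ i * σ (i + 1))
    (k : ℕ) (hk : k + 1 ≤ n) (j : ℕ) (hj : j + 1 ≤ k) :
    Db σ k j * Pb σ (k+1) = Pb σ k * Db σ k (j+1) := by
  induction j with
  | zero =>
    obtain ⟨k, rfl⟩ : ∃ a, k = a + 1 := ⟨k - 1, by omega⟩
    simp [Db, Pb]
  | succ j ih =>
    have hs := Pb_shift n σ hcomm hbraid (k - (j+1)) (by omega) (k+1) (by omega) hk
    rw [show k - (j+1) + 1 = k - j by omega] at hs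
    rw [Db, mul_assoc, hs, ← mul_assoc, ih (by omega), mul_assoc]
    rfl

theorem Pb_pow {G : Type*} [Group G] (n : ℕ) (σ : ℕ → G)
    (hcomm : ∀ i j : ℕ, 1 ≤ i → i + 1 < j → j + 1 ≤ n → σ i * σ j = σ j * σ i)
    (hbraid : ∀ i : ℕ, 1 ≤ i → i + 2 ≤ n →
      σ i * σ (i + 1) * σ i = σ (i + 1) * σ i * σ (i + 1))
    (k : ℕ) (hk : k + 1 ≤ n) (j : ℕ) (hj : j ≤ k) :
    Pb σ (k+1) ^ j = Pb σ k ^ j * Db σ k j := by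
  induction j with
  | zero => simp [Db]
  | succ j ih =>
    rw [pow_succ, ih (by omega), mul_assoc, Db_mul_Pb n σ hcomm hbraid k hk j hj, ← mul_assoc,
      ← pow_succ]

/-- For `1 ≤ k ≤ n`, the square of the torsion equals `P_k^k`. -/
theorem torsion_sq_eq_P_pow {G : Type*} [Group G] (n : ℕ) (hn : 1 ≤ n)
    (σ : ℕ → G)
    (hcomm : ∀ i j : ℕ, 1 ≤ i → i + 1 < j → j + 1 ≤ n → σ i * σ j = σ j * σ i)
    (hbraid : ∀ i : ℕ, 1 ≤ i → i + 2 ≤ n →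
      σ i * σ (i + 1) * σ i = σ (i + 1) * σ i * σ (i + 1))
    (k : ℕ) (hk1 : 1 ≤ k) (hk : k ≤ n) :
    Tb σ k * Tb σ k = (Pb σ k) ^ k := by
  induction k, hk1 using Nat.le_induction with
  | base => simp [Tb, Pb, Qb]
  | succ k hk1 ih =>
    have h := Tb_eq_Pb_mul n σ hcomm k hk
    have hp := Pb_pow n σ hcomm hbraid k hk k le_rfl
    rw [pow_succ', hp, Db_eq_Qb, ← ih (by omega)]
    calc Tb σ (k+1) * Tb σ (k+1) = (Pb σ (k+1) * Tb σ k) * (Tb σ k * Qb σ (k+1)) := by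
          rw [← h]; rfl
      _ = _ := by simp only [mul_assoc]
end

section
/- In any group, if elements a and b satisfy aba = bab and abba = 1, then a⁴ = 1 and b⁴ = 1. -/
/-- In any group, if `aba = bab` and `abba = 1`, then `a⁴ = 1` and `b⁴ = 1`. -/
theorem fourth_power_eq_one {H : Type*} [Group H] (a b : H)
    (h1 : a * b * a = b * a * b) (h2 : a * b * b * a = 1) :
    a ^ 4 = 1 ∧ b ^ 4 = 1 := by
  have e1 : (b * b * a) * a = 1 := by
    apply mul_eq_one_comm.mp
    simpa only [mul_assoc] using h2
  have e2 : a * a = (b * b)⁻¹ := by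
    apply eq_inv_of_mul_eq_one_right
    simpa only [mul_assoc] using e1
  have cb : Commute (a * a) b := by
    rw [e2]
    exact ((Commute.refl b).mul_left (Commute.refl b)).inv_left
  have ca : Commute (a * a) a := (Commute.refl a).mul_left (Commute.refl a)
  have c : (a * a) * (a * b) = (a * b) * (a * a) := ca.mul_right cb
  have e3 : (a * b) * (a * a) = (b * b) * (a * b) := by
    calc (a * b) * (a * a) = (a * b * a) * a := by simp only [mul_assoc]
      _ = b * (a * b * a) := by rw [h1]; simp only [mul_assoc] at h1 ⊢; rw [h1]
      _ = (b * b) * (a * b) := by rw [h1]; simp only [mul_assoc]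
  have e4 : a * a = b * b := mul_right_cancel (c.trans e3)
  have e5 : (b * b) * (a * a) = 1 := by rw [e2]; exact mul_inv_cancel _
  constructor
  · rw [← e4] at e5
    simpa only [pow_succ, pow_zero, one_mul, mul_assoc] using e5
  · rw [e4] at e5
    simpa only [pow_succ, pow_zero, one_mul, mul_assoc] using e5
end

section
/- The group G presented by generators a, b with relations aba = bab and abba = 1 has exactly 12 elements. -/
/-- The relators `a b a b⁻¹ a⁻¹ b⁻¹` (i.e. `aba = bab`) and `a b b a` (i.e. `abba = 1`),
where `a` and `b` are the two generators of the free group on two generators. -/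
def bbRels : Set (FreeGroup (Fin 2)) :=
  {FreeGroup.of 0 * FreeGroup.of 1 * FreeGroup.of 0 *
      (FreeGroup.of 1)⁻¹ * (FreeGroup.of 0)⁻¹ * (FreeGroup.of 1)⁻¹,
   FreeGroup.of 0 * FreeGroup.of 1 * FreeGroup.of 1 * FreeGroup.of 0}

namespace BBProof

abbrev Q := QuaternionGroup 3

/-- Images of the two generators in the dicyclic group of order 12. -/
def gens : Fin 2 → Q := ![QuaternionGroup.xa 0, QuaternionGroup.xa 4]

theorem gens_rel : ∀ r ∈ bbRels, FreeGroup.lift gens r = 1 := by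
  intro r hr
  rcases hr with rfl | rfl
  · simp only [map_mul, map_inv, FreeGroup.lift_apply_of]
    decide
  · simp only [map_mul, FreeGroup.lift_apply_of]
    decide

def toQ : PresentedGroup bbRels →* Q := PresentedGroup.toGroup gens_rel

section
variable {G : Type*} [Group G]

def back (u x : G) : Q → G
  | QuaternionGroup.a i => x ^ (ZMod.val (n := 6) i)
  | QuaternionGroup.xa i => u * x ^ (ZMod.val (n := 6) i)

theorem pow_val_add {x : G} (h6 : x ^ 6 = 1) (i j : ZMod 6) :
    x ^ (i + j).val = x ^ i.val * x ^ j.val := by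
  rw [ZMod.val_add, ← pow_add]
  exact (pow_eq_pow_mod _ h6).symm

theorem pow_val_sub {x : G} (h6 : x ^ 6 = 1) (i j : ZMod 6) :
    x ^ (j - i).val = (x ^ i.val)⁻¹ * x ^ j.val := by
  rw [eq_inv_mul_iff_mul_eq, ← pow_val_add h6, add_sub_cancel]

theorem back_mul {u x : G} (h6 : x ^ 6 = 1) (h3 : u * u = x ^ 3)
    (hc : x * u = u * x⁻¹) (p q : Q) : back u x (p * q) = back u x p * back u x q := by
  have hp : ∀ n : ℕ, x ^ n * u = u * (x ^ n)⁻¹ := by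
    intro n
    have h : SemiconjBy u x⁻¹ x := hc.symm
    have := h.pow_right n
    rw [inv_pow] at this
    exact this.symm
  rcases p with i | i <;> rcases q with j | j
  · exact pow_val_add h6 i j
  · change u * x ^ (ZMod.val (n := 6) (j - i)) = x ^ _ * (u * x ^ _)
    rw [pow_val_sub h6, ← mul_assoc, ← mul_assoc, hp]
  · change u * x ^ (ZMod.val (n := 6) (i + j)) = u * x ^ _ * (x ^ _)
    rw [pow_val_add h6, mul_assoc]
  · change x ^ (ZMod.val (n := 6) (3 + j - i)) = u * x ^ _ * (u * x ^ _)
    have e : x ^ (ZMod.val (n := 6) 3) = x ^ 3 := rfl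
    rw [add_sub_assoc, pow_val_add h6, pow_val_sub h6, e, ← h3]
    rw [mul_assoc u (x ^ _), ← mul_assoc (x ^ _) u, hp]
    simp only [mul_assoc]

theorem facts {u v : G} (h1 : u * v * u = v * u * v) (h2 : u * v * v * u = 1) :
    (u * v) ^ 6 = 1 ∧ u * u = (u * v) ^ 3 ∧ (u * v) * u = u * (u * v)⁻¹ := by
  have hinv : (u * v)⁻¹ = v * u := by
    rw [inv_eq_iff_mul_eq_one]; simpa only [mul_assoc] using h2
  have hc : (u * v) * u = u * (u * v)⁻¹ := by rw [hinv, mul_assoc]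
  -- the square of `u` commutes with `v`
  have hs : v * v = u⁻¹ * u⁻¹ := by
    rw [eq_inv_mul_iff_mul_eq, eq_inv_iff_mul_eq_one]; simpa only [mul_assoc] using h2
  have hs' : u * u = (v * v)⁻¹ := by rw [hs, mul_inv_rev, inv_inv]
  have hcomm : v * (u * u) = (u * u) * v := by rw [hs']; group
  have h3 : u * u = (u * v) ^ 3 := by
    symm
    calc (u * v) ^ 3 = (u * v * u) * (v * u * v) := by simp only [pow_succ, pow_zero, one_mul, mul_assoc]
      _ = (u * v * u) * (u * v * u) := by rw [h1]
      _ = u * (v * (u * u)) * (v * u) := by simp only [mul_assoc]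
      _ = u * u * (u * v * v * u) := by rw [hcomm]; simp only [mul_assoc]
      _ = u * u := by rw [h2, mul_one]
  refine ⟨?_, h3, hc⟩
  have h : SemiconjBy u (u * v)⁻¹ (u * v) := hc.symm
  have h' := h.pow_right 3
  rw [inv_pow, ← h3] at h'
  have h'' : u * (u * u)⁻¹ = (u * u) * u := h'
  have h4 : u * u * (u * u) = 1 := by
    have : u * (u * u)⁻¹ = u * (u * u) := by rw [h'', mul_assoc]
    have := mul_left_cancel this
    exact (inv_eq_iff_mul_eq_one.mp this)
  calc (u * v) ^ 6 = (u * v) ^ 3 * (u * v) ^ 3 := by rw [← pow_add]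
    _ = 1 := by rw [← h3, h4]

end

abbrev gA : PresentedGroup bbRels := PresentedGroup.of 0
abbrev gB : PresentedGroup bbRels := PresentedGroup.of 1

theorem relA : gA * gB * gA = gB * gA * gB := by
  have h := PresentedGroup.one_of_mem (rels := bbRels) (Or.inl rfl)
  simp only [map_mul, map_inv] at h
  change gA * gB * gA * gB⁻¹ * gA⁻¹ * gB⁻¹ = 1 at h
  rw [mul_inv_eq_one, mul_inv_eq_iff_eq_mul, mul_inv_eq_iff_eq_mul] at h
  rw [h]

theorem relB : gA * gB * gB * gA = 1 := by
  have h := PresentedGroup.one_of_mem (rels := bbRels) (Or.inr rfl)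
  simp only [map_mul] at h
  exact h

def fromQ : Q →* PresentedGroup bbRels :=
  MonoidHom.mk' (back gA (gA * gB))
    (back_mul (facts relA relB).1 (facts relA relB).2.1 (facts relA relB).2.2)

theorem toQ_A : toQ gA = QuaternionGroup.xa 0 := PresentedGroup.toGroup.of gens_rel
theorem toQ_B : toQ gB = QuaternionGroup.xa 4 := PresentedGroup.toGroup.of gens_rel

theorem from_to : fromQ.comp toQ = MonoidHom.id _ := by
  apply PresentedGroup.ext
  intro i
  fin_cases i
  · change fromQ (toQ gA) = gA
    rw [toQ_A]
    change gA * (gA * gB) ^ 0 = gA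
    simp
  · change fromQ (toQ gB) = gB
    rw [toQ_B]
    change gA * (gA * gB) ^ 4 = gB
    obtain ⟨h6, h3, hc⟩ := facts relA relB
    have : gA * (gA * gB) ^ 4 = gA * (gA * gB) ^ 3 * (gA * gB) := by rw [pow_succ, mul_assoc]
    rw [this, ← h3]
    have h4 : gA * gA * (gA * gA) = 1 := by rw [h3, ← pow_add, h6]
    calc _ = gA * gA * (gA * gA) * gB := by simp only [mul_assoc]
      _ = gB := by rw [h4, one_mul]

theorem to_from (q : Q) : toQ (fromQ q) = q := by
  have hx : toQ (gA * gB) = QuaternionGroup.a 1 := by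
    rw [map_mul, toQ_A, toQ_B]; decide
  rcases q with i | i
  · change toQ ((gA * gB) ^ (ZMod.val (n := 6) i)) = _
    rw [map_pow, hx]
    revert i; decide
  · change toQ (gA * (gA * gB) ^ (ZMod.val (n := 6) i)) = _
    rw [map_mul, map_pow, hx, toQ_A]
    revert i; decide

end BBProof

/-- The group presented by generators `a, b` with relations `aba = bab` and
`abba = 1` has exactly 12 elements. -/
theorem presented_card_eq_twelve : Nat.card (PresentedGroup bbRels) = 12 := by
  have e : PresentedGroup bbRels ≃ QuaternionGroup 3 :=
    ⟨BBProof.toQ, BBProof.fromQ, fun g => DFunLike.congr_fun BBProof.from_to g, BBProof.to_from⟩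
  rw [Nat.card_congr e, Nat.card_eq_fintype_card, QuaternionGroup.card]
end

section
/- In the group G presented by generators a, b with relations aba = bab and abba = 1, the cyclic subgroup generated by c = ab⁻¹ is a normal subgroup of order 3. -/
theorem key_aux {G : Type*} [Group G] (a b : G) (h1 : a * b * a * b⁻¹ * a⁻¹ * b⁻¹ = 1)
    (h2 : a * b * b * a = 1) :
    a * (a * b⁻¹) * a⁻¹ = (a * b⁻¹)⁻¹ ∧ b * (a * b⁻¹) * b⁻¹ = (a * b⁻¹)⁻¹ ∧
      (a * b⁻¹) ^ 3 = 1 := by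
  have h1' : a * b * a = b * a * b := by
    have h : a * b * a * (b * a * b)⁻¹ = 1 := by
      rw [← h1]; group
    exact mul_inv_eq_one.mp h
  -- `b * b` is the inverse of `a * a`
  have hab : a * a * (b * b) = 1 := by
    calc a * a * (b * b) = a * (a * b * b * a) * a⁻¹ := by group
      _ = 1 := by rw [h2]; group
  have hba : b * b * (a * a) = 1 := by
    calc b * b * (a * a) = a⁻¹ * (a * b * b * a) * a := by group
      _ = 1 := by rw [h2]; group
  have haba : b * (a * a) * b = 1 := by
    calc b * (a * a) * b = b⁻¹ * (b * b * (a * a)) * b := by group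
      _ = 1 := by rw [hba]; group
  have e1 : (a * b * a) * (a * b * a) = a * a := by
    calc (a * b * a) * (a * b * a) = a * (b * (a * a) * b) * a := by group
      _ = a * a := by rw [haba]; group
  have e2 : (b * a * b) * (b * a * b) = b * b := by
    calc (b * a * b) * (b * a * b) = b * (a * b * b * a) * b := by group
      _ = b * b := by rw [h2]; group
  have hsq : a * a = b * b := by rw [← e1, ← e2, h1']
  have hz : b * b * (b * b) = 1 := by rw [← hab, hsq]
  have hca : a * (b * b) = b * b * a := by rw [← hsq]; group
  have hbi : b⁻¹ = b * (b * b) := by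
    rw [inv_eq_iff_mul_eq_one, ← hz]; group
  refine ⟨?_, ?_, ?_⟩
  · calc a * (a * b⁻¹) * a⁻¹ = a * a * b⁻¹ * a⁻¹ := by group
      _ = (a * b⁻¹)⁻¹ := by rw [hsq]; group
  · calc b * (a * b⁻¹) * b⁻¹ = b * a * (b * b)⁻¹ := by group
      _ = (a * b⁻¹)⁻¹ := by rw [← hsq]; group
  · have hc : Commute a (b * b) := hca
    have hcb : Commute b (b * b) := by simp [Commute, SemiconjBy, mul_assoc]
    have hcab : Commute (a * b) (b * b) := hc.mul_left hcb
    have : a * b⁻¹ = (a * b) * (b * b) := by rw [hbi]; group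
    rw [this, hcab.mul_pow]
    calc (a * b) ^ 3 * (b * b) ^ 3 = (a * b * a) * (b * a * b) * (b * b) ^ 3 := by
          simp only [pow_succ, pow_zero, one_mul, mul_assoc]
      _ = b * b * (b * b) ^ 3 := by rw [h1', e2]
      _ = (b * b * (b * b)) * (b * b * (b * b)) := by
          simp only [pow_succ, pow_zero, one_mul, mul_assoc]
      _ = 1 := by rw [hz, one_mul]

theorem ne_one_aux :
    PresentedGroup.of (rels := bbRels) 0 * (PresentedGroup.of (rels := bbRels) 1)⁻¹ ≠ 1 := by
  intro h
  let f : Fin 2 → Equiv.Perm (Fin 3) := ![Equiv.swap 0 1, Equiv.swap 1 2]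
  have hf : ∀ r ∈ bbRels, FreeGroup.lift f r = 1 := by
    intro r hr
    rcases hr with rfl | rfl
    · simp only [map_mul, map_inv, FreeGroup.lift_apply_of]
      decide
    · simp only [map_mul, FreeGroup.lift_apply_of]
      decide
  have h' := congrArg (PresentedGroup.toGroup hf) h
  simp only [map_mul, map_inv, PresentedGroup.toGroup.of, map_one] at h'
  revert h'
  decide

/-- In the group presented by generators `a, b` with relations `aba = bab` and
`abba = 1`, the cyclic subgroup generated by `c = ab⁻¹` is a normal subgroup of
order 3. -/
theorem zpowers_c_normal_card_three :
    (Subgroup.zpowers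
        (PresentedGroup.of (rels := bbRels) 0 * (PresentedGroup.of (rels := bbRels) 1)⁻¹)).Normal ∧
      Nat.card
        (Subgroup.zpowers
          (PresentedGroup.of (rels := bbRels) 0 * (PresentedGroup.of (rels := bbRels) 1)⁻¹)) = 3 := by
  have h1 : PresentedGroup.mk bbRels _ = 1 :=
    PresentedGroup.one_of_mem (rels := bbRels) (Set.mem_insert _ _)
  have h2 : PresentedGroup.mk bbRels _ = 1 :=
    PresentedGroup.one_of_mem (rels := bbRels) (Set.mem_insert_of_mem _ (Set.mem_singleton _))
  simp only [map_mul, map_inv] at h1 h2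
  obtain ⟨ka, kb, k3⟩ := key_aux (PresentedGroup.of (rels := bbRels) 0)
    (PresentedGroup.of (rels := bbRels) 1) h1 h2
  have hne := ne_one_aux
  generalize hc : PresentedGroup.of (rels := bbRels) 0 *
    (PresentedGroup.of (rels := bbRels) 1)⁻¹ = c at *
  have hconj : ∀ g : PresentedGroup bbRels, g * c * g⁻¹ = c ∨ g * c * g⁻¹ = c⁻¹ := by
    intro g
    have hg : g ∈ Subgroup.closure (Set.range (PresentedGroup.of (rels := bbRels))) := by
      rw [PresentedGroup.closure_range_of]; trivial
    induction hg using Subgroup.closure_induction with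
    | mem x hx =>
      obtain ⟨i, rfl⟩ := hx
      right
      fin_cases i
      · exact ka
      · exact kb
    | one => left; simp
    | mul x y _ _ hx hy =>
      have e : x * y * c * (x * y)⁻¹ = x * (y * c * y⁻¹) * x⁻¹ := by group
      have e' : x * c⁻¹ * x⁻¹ = (x * c * x⁻¹)⁻¹ := by group
      rw [e]
      rcases hx with hx | hx <;> rcases hy with hy | hy <;> rw [hy] <;> simp [e', hx]
    | inv x _ hx =>
      rcases hx with hx | hx
      · left
        calc x⁻¹ * c * x⁻¹⁻¹ = x⁻¹ * (x * c * x⁻¹) * x := by rw [hx]; group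
          _ = c := by group
      · right
        calc x⁻¹ * c * x⁻¹⁻¹ = (x⁻¹ * c⁻¹ * x)⁻¹ := by group
          _ = (x⁻¹ * (x * c * x⁻¹) * x)⁻¹ := by rw [hx]
          _ = c⁻¹ := by group
  refine ⟨⟨?_⟩, ?_⟩
  · rintro n ⟨k, rfl⟩ g
    change g * c ^ k * g⁻¹ ∈ _
    rw [← conj_zpow]
    apply Subgroup.zpow_mem
    rcases hconj g with h | h <;> rw [h]
    · exact Subgroup.mem_zpowers c
    · exact Subgroup.inv_mem _ (Subgroup.mem_zpowers c)
  · rw [Nat.card_zpowers]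
    haveI : Fact (Nat.Prime 3) := ⟨Nat.prime_three⟩
    exact orderOf_eq_prime k3 hne
end

section
/- Define sequences (u_k), (v_k) in SL₂(ℤ) by u₀ = x, v₀ = y, u_{k+1} = u_k v_k u_k⁻¹, v_{k+1} = u_k. Then for every k ≥ 0, the maximum of the absolute values of the four entries of u_{k+1} is strictly greater than the maximum of the absolute values of the four entries of u_k. -/
/-- The pair sequence `(u_k, v_k)` in `SL₂(ℤ)`: `u₀ = x = [[1,1],[0,1]]`,
`v₀ = y = [[1,0],[1,1]]`, `u_{k+1} = u_k v_k u_k⁻¹`, `v_{k+1} = u_k`. -/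
def uvSeq : ℕ → Matrix.SpecialLinearGroup (Fin 2) ℤ × Matrix.SpecialLinearGroup (Fin 2) ℤ
  | 0 => (⟨!![1, 1; 0, 1], by norm_num [Matrix.det_fin_two_of]⟩,
          ⟨!![1, 0; 1, 1], by norm_num [Matrix.det_fin_two_of]⟩)
  | (k+1) => ((uvSeq k).1 * (uvSeq k).2 * (uvSeq k).1⁻¹, (uvSeq k).1)

/-- The maximum of the absolute values of the four entries of a matrix in `SL₂(ℤ)`. -/
def maxEntry (g : Matrix.SpecialLinearGroup (Fin 2) ℤ) : ℤ :=
  max (max |(g : Matrix (Fin 2) (Fin 2) ℤ) 0 0| |(g : Matrix (Fin 2) (Fin 2) ℤ) 0 1|)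
      (max |(g : Matrix (Fin 2) (Fin 2) ℤ) 1 0| |(g : Matrix (Fin 2) (Fin 2) ℤ) 1 1|)

/-- The matrix identity behind the induction step. -/
lemma uv_step (s p q : ℤ) (hs : s * s = 1) (hc : p * (p - q) - q ^ 2 = -s)
    (u v : Matrix.SpecialLinearGroup (Fin 2) ℤ)
    (hu : (u : Matrix (Fin 2) (Fin 2) ℤ)
      = !![1 + s * p * q, -s * p ^ 2; s * q ^ 2, 1 - s * p * q])
    (hv : (v : Matrix (Fin 2) (Fin 2) ℤ)
      = !![1 - s * q * (p - q), s * q ^ 2; -s * (p - q) ^ 2, 1 + s * q * (p - q)]) :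
    ((u * v * u⁻¹ : Matrix.SpecialLinearGroup (Fin 2) ℤ) : Matrix (Fin 2) (Fin 2) ℤ)
      = !![1 - s * (p + q) * p, s * (p + q) ^ 2; -s * p ^ 2, 1 + s * (p + q) * p] := by
  have ha : p + q = q + s * p * q ^ 2 - s * p ^ 2 * (p - q) := by
    linear_combination (-p) * hs + s * p * hc
  have hb : p = s * q ^ 3 + (p - q) - s * p * q * (p - q) := by
    linear_combination (-q) * hs + s * q * hc
  obtain ⟨a, ha'⟩ : ∃ a, a = p + q := ⟨_, rfl⟩
  obtain ⟨b, hb'⟩ : ∃ b, b = p := ⟨_, rfl⟩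
  have key : !![1 - s * (p + q) * p, s * (p + q) ^ 2; -s * p ^ 2, 1 + s * (p + q) * p]
      = !![1 - s * a * b, s * a ^ 2; -s * b ^ 2, 1 + s * a * b] := by rw [ha', hb']
  rw [key]
  have ha2 := ha'.trans ha
  have hb2 := hb'.trans hb
  simp only [Matrix.SpecialLinearGroup.coe_mul, Matrix.SpecialLinearGroup.coe_inv, hu, hv,
    Matrix.adjugate_fin_two_of, Matrix.mul_fin_two]
  clear ha hb ha' hb' key
  subst ha2 hb2
  ext i j
  fin_cases i <;> fin_cases j <;> simp <;> ring

/-- Explicit form of `u_k`, `v_k` for `k ≥ 1` (`p, q` are consecutive Fibonacci numbers). -/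
lemma uv_form (k : ℕ) : ∃ s p q : ℤ, s * s = 1 ∧ 1 ≤ p ∧ 1 ≤ q ∧ p * (p - q) - q ^ 2 = -s ∧
    ((uvSeq (k+1)).1 : Matrix (Fin 2) (Fin 2) ℤ)
      = !![1 + s * p * q, -s * p ^ 2; s * q ^ 2, 1 - s * p * q] ∧
    ((uvSeq (k+1)).2 : Matrix (Fin 2) (Fin 2) ℤ)
      = !![1 - s * q * (p - q), s * q ^ 2; -s * (p - q) ^ 2, 1 + s * q * (p - q)] := by
  induction k with
  | zero =>
    refine ⟨1, 1, 1, by norm_num, by norm_num, by norm_num, by norm_num, ?_, ?_⟩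
    · decide
    · simp [uvSeq]
  | succ k ih =>
    obtain ⟨s, p, q, hs, hp, hq, hc, hu, hv⟩ := ih
    refine ⟨-s, p + q, p, by linarith, by linarith, hp, by linarith, ?_, ?_⟩
    · rw [uvSeq]
      rw [uv_step s p q hs hc _ _ hu hv]
      ext i j
      fin_cases i <;> fin_cases j <;> simp
      ring
    · rw [uvSeq]
      simp only [hu]
      ext i j
      fin_cases i <;> fin_cases j <;> simp <;> ring

/-- The maximum absolute value of the entries of `u_k` is strictly increasing in `k`. -/
theorem maxEntry_strict_mono : ∀ k : ℕ, maxEntry (uvSeq k).1 < maxEntry (uvSeq (k + 1)).1 := by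
  intro k
  cases k with
  | zero =>
    decide
  | succ k =>
    obtain ⟨s, p, q, hs, hp, hq, hc, hu, hv⟩ := uv_form k
    have hb : |((uvSeq (k+1+1)).1 : Matrix (Fin 2) (Fin 2) ℤ) 0 1| ≤ maxEntry (uvSeq (k+1+1)).1 :=
      (le_max_right _ _).trans (le_max_left _ _)
    refine lt_of_lt_of_le ?_ hb
    have h := uv_step s p q hs hc _ _ hu hv
    have hn : (uvSeq (k+1+1)).1 = (uvSeq (k+1)).1 * (uvSeq (k+1)).2 * (uvSeq (k+1)).1⁻¹ := rfl
    rw [hn, h]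
    simp only [maxEntry, hu]
    have hs' : |s| = 1 := by
      rcases mul_self_eq_one_iff.mp hs with rfl | rfl <;> simp
    have hpq : 1 ≤ p * q := by nlinarith
    have hle : s ≤ 1 ∧ -1 ≤ s := by
      rcases mul_self_eq_one_iff.mp hs with rfl | rfl <;> simp
    have e1 : |1 + s * p * q| ≤ 1 + p * q := by
      rw [abs_le]; constructor <;> nlinarith
    have e2 : |1 - s * p * q| ≤ 1 + p * q := by
      rw [abs_le]; constructor <;> nlinarith
    simp only [Matrix.of_apply, Matrix.cons_val', Matrix.cons_val_zero, Matrix.cons_val_one,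
      Matrix.cons_val_fin_one, abs_mul s, abs_neg, neg_mul, hs', one_mul, abs_pow, sq_abs]
    refine max_lt (max_lt ?_ ?_) (max_lt ?_ ?_) <;> nlinarith
end

section
/- Define sequences (u_k), (v_k) in SL₂(ℤ) by u₀ = x, v₀ = y, u_{k+1} = u_k v_k u_k⁻¹, v_{k+1} = u_k. Then the map k ↦ (u_k, v_k) is injective; that is, the pairs (u_k, v_k) for k = 0, 1, 2, … are pairwise distinct. -/
theorem uvSeq_prod (k : ℕ) :
    ((uvSeq k).1 * (uvSeq k).2 : Matrix.SpecialLinearGroup (Fin 2) ℤ).1 = !![2, 1; 1, 1] := by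
  induction k with
  | zero =>
    change (!![1, 1; 0, 1] * !![1, 0; 1, 1] : Matrix (Fin 2) (Fin 2) ℤ) = _
    rw [Matrix.mul_fin_two]
    norm_num
  | succ k ih => simpa only [uvSeq, inv_mul_cancel_right] using ih

/-- Entrywise recursion: `u_{k+1} = (x y) u_k⁻¹`. -/
theorem uvSeq_step (k : ℕ) :
    (uvSeq (k + 1)).1.1 = !![2, 1; 1, 1] * (uvSeq k).1.1.adjugate := by
  have h : (uvSeq (k + 1)).1.1
      = ((uvSeq k).1 * (uvSeq k).2 : Matrix.SpecialLinearGroup (Fin 2) ℤ).1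
        * (uvSeq k).1.1.adjugate := rfl
  rw [h, uvSeq_prod]

theorem uvSeq_form (k : ℕ) : ∃ b c : ℤ, (uvSeq k).1.1 = !![2 - b - c, b; c, b + c] ∧
    ((1 ≤ b ∧ 1 ≤ b + c) ∨ (b ≤ -1 ∧ b + c ≤ 0)) := by
  induction k with
  | zero => exact ⟨1, 0, by simp [uvSeq], by norm_num⟩
  | succ k ih =>
    obtain ⟨b, c, h, hs⟩ := ih
    refine ⟨2 - 3 * b - c, b, ?_, by omega⟩
    rw [uvSeq_step, h, Matrix.adjugate_fin_two_of, Matrix.mul_fin_two]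
    ext i j
    fin_cases i <;> fin_cases j <;> simp <;> ring

/-- The pairs `(u_k, v_k)` are pairwise distinct: `k ↦ (u_k, v_k)` is injective. -/
theorem uvSeq_injective : Function.Injective uvSeq := by
  have hm : StrictMono (fun k => |(uvSeq k).1.1 0 1 - (uvSeq k).1.1 1 0|) := by
    refine strictMono_nat_of_lt_succ fun k => ?_
    obtain ⟨b, c, h, hs⟩ := uvSeq_form k
    simp only [uvSeq_step, h, Matrix.adjugate_fin_two_of, Matrix.mul_fin_two]
    simp
    rw [abs_lt, lt_abs, neg_lt, lt_abs]
    omega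
  intro i j hij
  exact hm.injective (by simp only [hij])
end

section
/- In any group, if elements a and b satisfy aba = bab and abba = 1, then the subgroup generated by a and b has at most 12 elements; every element of it equals one of 1, c, c², a, ca, c²a, a², ca², c²a², a³, ca³, c²a³ where c = ab⁻¹. -/
theorem aux_facts {H : Type*} [Group H] (a b : H)
    (h1 : a * b * a = b * a * b) (h2 : a * b * b * a = 1) :
    a ^ 4 = 1 ∧ (a * b⁻¹) ^ 3 = 1 ∧ a * (a * b⁻¹) = (a * b⁻¹) ^ 2 * a ∧
      b = (a * b⁻¹) ^ 2 * a := by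
  have hz : a * a = (b * b)⁻¹ := by
    have h3 : b * b = a⁻¹ * a⁻¹ := by
      calc b * b = a⁻¹ * (a * b * b * a) * a⁻¹ := by group
        _ = a⁻¹ * a⁻¹ := by rw [h2]; group
    rw [h3]; simp
  have hcb : a * a * b = b * (a * a) := by rw [hz]; group
  have hab : a * a = b * b := by
    have e1 : a * b * a * (a * a) = b * b * (a * b * a) := by
      calc a * b * a * (a * a) = (a * b * a) * a * a := by group
        _ = b * (a * b * a) * a := by rw [h1]; nth_rewrite 1 [mul_assoc (b * a) b a]
                                      rw [← h1]; group
        _ = b * ((b * a * b) * a) := by rw [h1]; group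
        _ = b * b * (a * b * a) := by group
    have e2 : a * b * a * (a * a) = a * a * (a * b * a) := by
      calc a * b * a * (a * a) = a * (b * (a * a)) * a := by group
        _ = a * (a * a * b) * a := by rw [hcb]
        _ = a * a * (a * b * a) := by group
    exact mul_right_cancel (e2.symm.trans e1)
  have h4 : a * a * (a * a) = 1 := by
    nth_rewrite 1 [hz]
    rw [hab]; group
  have hbi : b⁻¹ = a * a * b := by
    rw [hz]; group
  have hinv : (a * b⁻¹) ^ 3 = 1 := by
    have e : (a * b⁻¹) = (a * a) * (a * b) := by rw [hbi]; group
    have hc : Commute (a * a) (a * b) :=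
      (show Commute (a * a) a by simp [Commute, SemiconjBy, mul_assoc]).mul_right hcb
    rw [e, hc.mul_pow]
    have e3 : (a * b) ^ 3 = a * a * (a * a) * (a * a) := by
      calc (a * b) ^ 3 = (a * b * a) * (b * a * b) := by
            simp only [pow_succ, pow_zero, one_mul, mul_assoc]
        _ = a * b * (a * a) * b * a := by rw [← h1]; simp only [mul_assoc]
        _ = a * (b * (a * a)) * b * a := by simp only [mul_assoc]
        _ = a * (a * a) * (b * b) * a := by rw [← hcb]; simp only [mul_assoc]
        _ = a * a * (a * a) * (a * a) := by rw [← hab]; simp only [mul_assoc]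
    rw [e3, h4, one_mul, ← pow_succ]
    calc (a * a) ^ (3 + 1) = (a * a * (a * a)) * (a * a * (a * a)) := by
            simp only [pow_succ, pow_zero, one_mul, mul_assoc]
      _ = 1 := by rw [h4, one_mul]
  have hc2 : (a * b⁻¹) ^ 2 = b * a⁻¹ := by
    have : (a * b⁻¹) ^ 2 = (a * b⁻¹) ^ 3 * (a * b⁻¹)⁻¹ := by
      rw [pow_succ _ 2, mul_inv_cancel_right]
    rw [this, hinv]; group
  refine ⟨?_, hinv, ?_, ?_⟩
  · rw [← h4]; simp only [pow_succ, pow_zero, one_mul, mul_assoc]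
  · rw [hc2]
    calc a * (a * b⁻¹) = a * a * b⁻¹ := by group
      _ = b := by rw [hab]; group
      _ = _ := by group
  · rw [hc2]; group

/-- In any group, if `aba = bab` and `abba = 1`, then the subgroup generated by `a`
and `b` has at most 12 elements; every element of it equals one of
`1, c, c², a, ca, c²a, a², ca², c²a², a³, ca³, c²a³` where `c = ab⁻¹`. -/
theorem closure_card_le_twelve {H : Type*} [Group H] (a b : H)
    (h1 : a * b * a = b * a * b) (h2 : a * b * b * a = 1) :
    Nat.card (Subgroup.closure ({a, b} : Set H)) ≤ 12 ∧
      ∀ g ∈ Subgroup.closure ({a, b} : Set H),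
        g ∈ ({1, a * b⁻¹, (a * b⁻¹) ^ 2,
              a, (a * b⁻¹) * a, (a * b⁻¹) ^ 2 * a,
              a ^ 2, (a * b⁻¹) * a ^ 2, (a * b⁻¹) ^ 2 * a ^ 2,
              a ^ 3, (a * b⁻¹) * a ^ 3, (a * b⁻¹) ^ 2 * a ^ 3} : Set H) := by
  obtain ⟨ha, hc, hac, hb⟩ := aux_facts a b h1 h2
  have hcm : a * b⁻¹ ∈ Subgroup.closure ({a, b} : Set H) :=
    mul_mem (Subgroup.subset_closure (by simp)) (inv_mem (Subgroup.subset_closure (by simp)))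
  have ham : a ∈ Subgroup.closure ({a, b} : Set H) := Subgroup.subset_closure (by simp)
  generalize hcdef : a * b⁻¹ = c at *
  have s1 : ∀ k : ℕ, a * c ^ k = c ^ (2 * k) * a := by
    intro k
    have : SemiconjBy a c (c ^ 2) := hac
    have := this.pow_right k
    rw [← pow_mul] at this
    exact this
  have s2 : ∀ j k : ℕ, a ^ j * c ^ k = c ^ (2 ^ j * k) * a ^ j := by
    intro j
    induction j with
    | zero => intro k; simp
    | succ n ih =>
      intro k
      rw [pow_succ a, mul_assoc, s1, ← mul_assoc, ih, mul_assoc, ← mul_assoc (2 ^ n), ← pow_succ, ← pow_succ]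
  have key : ∀ g ∈ Subgroup.closure ({a, b} : Set H), ∃ i j : ℕ, g = c ^ i * a ^ j := by
    intro g hg
    induction hg using Subgroup.closure_induction with
    | mem x hx =>
      rcases hx with rfl | rfl
      · exact ⟨0, 1, by simp⟩
      · exact ⟨2, 1, by rw [pow_one]; exact hb⟩
    | one => exact ⟨0, 0, by simp⟩
    | mul x y _ _ hx hy =>
      obtain ⟨i, j, rfl⟩ := hx
      obtain ⟨k, l, rfl⟩ := hy
      refine ⟨i + 2 ^ j * k, j + l, ?_⟩
      rw [mul_assoc, ← mul_assoc (a ^ j), s2, pow_add, pow_add]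
      simp only [mul_assoc]
    | inv x _ hx =>
      obtain ⟨i, j, rfl⟩ := hx
      refine ⟨2 ^ (3 * j) * (2 * i), 3 * j, ?_⟩
      rw [← s2, inv_eq_iff_mul_eq_one, mul_assoc, ← mul_assoc (a ^ j), ← pow_add,
        show j + 3 * j = 4 * j by ring, pow_mul, ha, one_pow, one_mul, ← pow_add,
        show i + 2 * i = 3 * i by ring, pow_mul, hc, one_pow]
  have key2 : ∀ g ∈ Subgroup.closure ({a, b} : Set H),
      ∃ (i : Fin 3) (j : Fin 4), g = c ^ (i : ℕ) * a ^ (j : ℕ) := by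
    intro g hg
    obtain ⟨i, j, rfl⟩ := key g hg
    refine ⟨⟨i % 3, Nat.mod_lt _ (by norm_num)⟩, ⟨j % 4, Nat.mod_lt _ (by norm_num)⟩, ?_⟩
    rw [pow_eq_pow_mod i hc, pow_eq_pow_mod j ha]
  constructor
  · let f : Fin 3 × Fin 4 → Subgroup.closure ({a, b} : Set H) := fun p =>
      ⟨c ^ (p.1 : ℕ) * a ^ (p.2 : ℕ), mul_mem (pow_mem hcm _) (pow_mem ham _)⟩
    have hf : Function.Surjective f := by
      rintro ⟨g, hg⟩
      obtain ⟨i, j, h⟩ := key2 g hg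
      exact ⟨(i, j), Subtype.ext h.symm⟩
    have := Nat.card_le_card_of_surjective f hf
    simpa using this
  · intro g hg
    obtain ⟨i, j, rfl⟩ := key2 g hg
    fin_cases i <;> fin_cases j <;> simp
end

section
/- In the group G presented by generators a, b with relations aba = bab and abba = 1, the images of a and b each have order exactly 4, and the image of c = ab⁻¹ has order exactly 3. -/
theorem bb_aux {G : Type*} [Group G] (a b : G) (h1 : a * b * a * b⁻¹ * a⁻¹ * b⁻¹ = 1)
    (h2 : a * b * b * a = 1) : a ^ 4 = 1 ∧ b ^ 4 = 1 ∧ (a * b⁻¹) ^ 3 = 1 := by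
  have hbr : a * b * a = b * a * b := by
    have h := congrArg (· * (b * a * b)) h1
    simpa [mul_assoc] using h
  have hb : b ^ 2 = (a ^ 2)⁻¹ := by
    have h := congrArg (fun x => a⁻¹ * x * a⁻¹) h2
    simpa [mul_assoc, pow_two] using h
  have hc : Commute (a ^ 2) b := by
    have h : Commute (b ^ 2) b := (Commute.refl b).pow_left 2
    rw [hb] at h
    exact (Commute.inv_left_iff).1 h
  have hca : Commute (a ^ 2) a := (Commute.refl a).pow_left 2
  have hconj : SemiconjBy (a * b * a) a b := by
    unfold SemiconjBy
    calc a * b * a * a = b * a * b * a := by rw [hbr]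
      _ = b * (a * b * a) := by group
  have hz : b ^ 2 = a ^ 2 := by
    have e1 : a * b * a * a ^ 2 = b ^ 2 * (a * b * a) := hconj.pow_right 2
    have e2 : a ^ 2 * (a * b * a) = a * b * a * a ^ 2 :=
      ((hca.mul_right hc).mul_right hca)
    rw [← e2] at e1
    exact (mul_right_cancel e1).symm
  have ha4 : a ^ 4 = 1 := by
    have : a ^ 2 * a ^ 2 = 1 := by
      nth_rewrite 1 [← hz]
      rw [hb]; simp
    rw [← this, ← pow_add]
  have hb4 : b ^ 4 = 1 := by
    rw [show 4 = 2 * 2 from rfl, pow_mul, hz, ← pow_mul]; exact ha4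
  refine ⟨ha4, hb4, ?_⟩
  have hbi : b⁻¹ = b * a ^ 2 := by
    rw [inv_eq_iff_mul_eq_one, ← hz, ← hb4]
    simp only [pow_succ, pow_zero, one_mul, mul_assoc]
  have hab : (a * b) ^ 3 = a ^ 2 := by
    calc (a * b) ^ 3 = (a * b * a) * (b * a * b) := by simp only [pow_succ, pow_zero, one_mul, mul_assoc]
      _ = (a * b * a) * (a * b * a) := by rw [hbr]
      _ = a * (b * a ^ 2) * (b * a) := by simp only [pow_succ, pow_zero, one_mul, mul_assoc]
      _ = a * (a ^ 2 * b) * (b * a) := by rw [hc.eq]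
      _ = a ^ 2 * (a * b * b * a) := by simp only [pow_succ, pow_zero, one_mul, mul_assoc]
      _ = a ^ 2 := by rw [h2, mul_one]
  have hcm : Commute (a * b) (a ^ 2) := (hca.mul_right hc).symm
  rw [hbi, ← mul_assoc, hcm.mul_pow, hab, ← pow_mul, ← pow_add]
  exact (pow_mul a 4 2).trans (by rw [ha4, one_pow])

/-- The images of the generators in the dicyclic group of order 12. -/
def bbGen : Fin 2 → QuaternionGroup 3 := ![QuaternionGroup.xa 0, QuaternionGroup.xa 2]

theorem bb_rels_hold : ∀ r ∈ bbRels, FreeGroup.lift bbGen r = 1 := by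
  rintro r (rfl | rfl)
  · simp only [map_mul, map_inv, FreeGroup.lift_apply_of]
    decide
  · simp only [map_mul, FreeGroup.lift_apply_of]
    decide

/-- In the group presented by generators `a, b` with relations `aba = bab` and
`abba = 1`, the images of `a` and `b` each have order exactly 4, and the image
of `c = ab⁻¹` has order exactly 3. -/
theorem presented_orders :
    orderOf (PresentedGroup.of (rels := bbRels) 0) = 4 ∧
      orderOf (PresentedGroup.of (rels := bbRels) 1) = 4 ∧
      orderOf
        (PresentedGroup.of (rels := bbRels) 0 * (PresentedGroup.of (rels := bbRels) 1)⁻¹) = 3 := by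
  obtain ⟨h0, h1, h2⟩ := bb_aux (PresentedGroup.of (rels := bbRels) 0)
    (PresentedGroup.of (rels := bbRels) 1)
    (PresentedGroup.one_of_mem (rels := bbRels) (Or.inl rfl))
    (PresentedGroup.one_of_mem (rels := bbRels) (Or.inr rfl))
  have key : ∀ i, PresentedGroup.toGroup bb_rels_hold (PresentedGroup.of i) = bbGen i :=
    fun i => PresentedGroup.toGroup.of bb_rels_hold
  haveI : Fact (Nat.Prime 3) := ⟨Nat.prime_three⟩
  refine ⟨orderOf_eq_prime_pow (p := 2) (n := 1) ?_ h0,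
    orderOf_eq_prime_pow (p := 2) (n := 1) ?_ h1, orderOf_eq_prime h2 ?_⟩
  · intro h
    have h' := congrArg (PresentedGroup.toGroup bb_rels_hold) h
    rw [map_pow, key, map_one] at h'
    revert h'; decide
  · intro h
    have h' := congrArg (PresentedGroup.toGroup bb_rels_hold) h
    rw [map_pow, key, map_one] at h'
    revert h'; decide
  · intro h
    have h' := congrArg (PresentedGroup.toGroup bb_rels_hold) h
    rw [map_mul, map_inv, key, key, map_one] at h'
    revert h'; decide
end
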